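/- Let q be a complex number with 0 < |q| < 1, fix a square root q^{1/2} of q, and let a, b, c be complex numbers with max{|a|,|b|,|c|} < 1. Then ∫₀^π h(cos θ; 1, -1, q^{1/2}, -q^{1/2}) / h(cos θ; a, b, c) dθ = 2π / ((q; q)_∞ (ab; q)_∞ (ac; q)_∞ (bc; q)_∞). -/

import Mathlib

open Complex MeasureTheory

/-- The q-shifted factorial `(x; q)_∞ = ∏_{k=0}^∞ (1 - x q^k)`. -/
noncomputable def qp (q x : ℂ) : ℂ := ∏' k : ℕ, (1 - x * q ^ k)

/-- The finite q-shifted factorial `(x; q)_n = ∏_{k=0}^{n-1} (1 - x q^k)`. -/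
noncomputable def qpn (q x : ℂ) (n : ℕ) : ℂ := ∏ k ∈ Finset.range n, (1 - x * q ^ k)

/-- For `x = cos θ`, `h(x; λ) = (λ e^{iθ}; q)_∞ (λ e^{-iθ}; q)_∞`. -/
noncomputable def hh (q : ℂ) (θ : ℝ) (l : ℂ) : ℂ :=
  qp q (l * Complex.exp ((θ : ℂ) * Complex.I)) *
    qp q (l * Complex.exp (-((θ : ℂ) * Complex.I)))

/-!
On the unit circle `z = e^{iθ}` the integrand is
`T(a, b, c) = (z², z⁻²; q)_∞ / ∏_{l ∈ {a, b, c}} (l z, l z⁻¹; q)_∞`, and the integral over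
`[0, π]` is `π` times its average. By Cauchy's theorem a function holomorphic on `|q| ≤ |z| ≤ 1`
has the same average as its dilate by `q`. Applied to `z θ(z²) / ∏ (l z, q l z⁻¹; q)_∞`, where
`θ(w) = (w, q w⁻¹; q)_∞`, this shows that `z + z⁻¹ - (a + b + c) + a b c` has average zero against
`T(a, b, c)`, hence `avg T(q a, b, c) = (1 - a b) (1 - a c) avg T(a, b, c)`. So
`(a b, a c; q)_∞ avg T(a, b, c)` is invariant under `a ↦ q a` and therefore equals its value at
`a = 0`; removing the three parameters one after the other leaves the average of `(z², z⁻²; q)_∞`.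
The latter is twice the average of `θ`, which is `1 / (q; q)_∞` by the same argument applied to
`θ(w) / (t w⁻¹; q)_∞`, an entire function at `t = q` and `θ` at `t = 0`.
-/

section CircleAverage

open Metric Set
open Real (circleAverage)
open scoped Real

variable {E : Type*} [NormedAddCommGroup E] [NormedSpace ℂ E]

lemma circleAverage_comp_const_mul (f : ℂ → E) (r : ℂ) (R : ℝ) :
    circleAverage (fun z ↦ f (r * z)) 0 R = circleAverage f 0 (‖r‖ * R) := by
  have hrot (θ : ℝ) : r * circleMap 0 R θ = circleMap 0 (‖r‖ * R) (θ + r.arg) := by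
    conv_lhs => rw [← norm_mul_exp_arg_mul_I r]
    simp only [circleMap, zero_add, ofReal_mul, ofReal_add, add_mul, Complex.exp_add]
    ring
  rw [Real.circleAverage_eq_integral_add (f := f) r.arg, Real.circleAverage_def]
  simp only [hrot]

lemma circleAverage_comp_pow {f : ℂ → E} (hf : CircleIntegrable f 0 1) {n : ℕ}
    (hn : n ≠ 0) : circleAverage (fun z ↦ f (z ^ n)) 0 1 = circleAverage f 0 1 := by
  have hn' : (n : ℝ) ≠ 0 := Nat.cast_ne_zero.mpr hn
  have hpow (θ : ℝ) : circleMap 0 1 θ ^ n = circleMap 0 1 (n * θ) := by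
    simp [circleMap, ← Complex.exp_nat_mul, mul_assoc]
  have hper : Function.Periodic (fun θ ↦ f (circleMap 0 1 θ)) (2 * π) :=
    (periodic_circleMap 0 1).comp f
  have hturns := hper.intervalIntegral_add_zsmul_eq n 0
    fun _ _ ↦ hper.intervalIntegrable₀ Real.two_pi_pos.ne' hf _ _
  simp only [zero_add, natCast_zsmul, nsmul_eq_mul] at hturns
  simp only [Real.circleAverage_def, hpow]
  rw [intervalIntegral.integral_comp_mul_left (fun θ ↦ f (circleMap 0 1 θ)) hn', mul_zero,
    hturns, ← Nat.cast_smul_eq_nsmul ℝ, inv_smul_smul₀ hn']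

lemma circleAverage_eq_of_differentiableAt_annulus [CompleteSpace E] {f : ℂ → E} {c : ℂ} {r R : ℝ}
    (hr : 0 < r) (hrR : r ≤ R)
    (hf : ∀ z, r ≤ ‖z - c‖ → ‖z - c‖ ≤ R → DifferentiableAt ℂ f z) :
    circleAverage f c r = circleAverage f c R := by
  have hdiff : ∀ z ∈ closedBall c R \ ball c r, DifferentiableAt ℂ f z := fun z hz ↦
    hf z (by simpa [dist_eq_norm] using hz.2) (by simpa [dist_eq_norm] using hz.1)
  rw [Real.circleAverage_eq_circleIntegral hr.ne',
    Real.circleAverage_eq_circleIntegral (hr.trans_le hrR).ne',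
    circleIntegral_sub_center_inv_smul_eq_of_differentiable_on_annulus_off_countable hr hrR
      countable_empty (fun z hz ↦ (hdiff z hz).continuousAt.continuousWithinAt)
      (fun z hz ↦ hdiff z (sdiff_subset_sdiff ball_subset_closedBall ball_subset_closedBall hz.1))]

lemma circleAverage_sub_smul_comp_const_mul [CompleteSpace E] {f : ℂ → E} {q : ℂ} (hq0 : q ≠ 0)
    (hq : ‖q‖ ≤ 1) (hf : ∀ z, ‖q‖ ≤ ‖z‖ → ‖z‖ ≤ 1 → DifferentiableAt ℂ f z) (t : ℂ) :
    circleAverage (fun z ↦ f z - t • f (q * z)) 0 1 = (1 - t) • circleAverage f 0 1 := by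
  have hdilate : circleAverage (fun z ↦ f (q * z)) 0 1 = circleAverage f 0 1 := by
    rw [circleAverage_comp_const_mul, mul_one]
    exact circleAverage_eq_of_differentiableAt_annulus (norm_pos_iff.mpr hq0) hq (by simpa using hf)
  have hint : CircleIntegrable f 0 1 := by
    refine ContinuousOn.circleIntegrable' fun z hz ↦ ?_
    have hz : ‖z‖ = 1 := by simpa using hz
    exact (hf z (hz ▸ hq) hz.le).continuousAt.continuousWithinAt
  have hint' : CircleIntegrable (fun z ↦ t • f (q * z)) 0 1 := by
    refine ContinuousOn.circleIntegrable' fun z hz ↦ ?_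
    have hz : ‖q * z‖ = ‖q‖ := by simp_all
    have := (hf (q * z) hz.ge (hz.trans_le hq)).continuousAt
    exact (this.comp (f := (q * ·)) (by fun_prop)).const_smul t |>.continuousWithinAt
  rw [Real.circleAverage_fun_sub hint hint', Real.circleAverage_fun_smul, hdilate, sub_smul,
    one_smul]

lemma continuousOn_circleAverage {X : Type*} [TopologicalSpace X] {F : X → ℂ → E} {s : Set X}
    {c : ℂ} {R : ℝ} (hF : ContinuousOn (Function.uncurry F) (s ×ˢ sphere c |R|)) :
    ContinuousOn (fun x ↦ circleAverage (F x) c R) s := by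
  rw [continuousOn_iff_continuous_domRestrict]
  refine .const_smul ?_ _
  refine intervalIntegral.continuous_parametric_intervalIntegral_of_continuous' ?_ _ _
  exact hF.comp_continuous (f := fun p : s × ℝ ↦ ((p.1 : X), circleMap c R p.2)) (by fun_prop)
    fun p ↦ ⟨p.1.2, circleMap_mem_sphere' c R p.2⟩

lemma intervalIntegral_zero_pi_eq_smul_circleAverage {f : ℂ → E}
    (hf : CircleIntegrable f 0 1) (hinv : ∀ z, f z⁻¹ = f z) :
    ∫ θ in (0 : ℝ)..π, f (circleMap 0 1 θ) = π • circleAverage f 0 1 := by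
  have hreflect (θ : ℝ) : f (circleMap 0 1 (2 * π - θ)) = f (circleMap 0 1 θ) := by
    rw [← hinv (circleMap 0 1 θ), circleMap_zero_inv, inv_one, (periodic_circleMap 0 1).sub_eq']
  have hlower : ∫ θ in π..(2 * π), f (circleMap 0 1 θ) =
      ∫ θ in (0 : ℝ)..π, f (circleMap 0 1 θ) := by
    have := intervalIntegral.integral_comp_sub_left (a := 0) (b := π)
      (fun θ ↦ f (circleMap 0 1 θ)) (2 * π)
    simp only [hreflect, sub_zero] at this
    rw [this]
    congr 1
    ring
  have hpi : π ∈ uIcc 0 (2 * π) :=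
    mem_uIcc_of_le Real.pi_nonneg (by linarith [Real.pi_nonneg])
  have hsplit : ∫ θ in (0 : ℝ)..(2 * π), f (circleMap 0 1 θ) =
      (2 : ℝ) • ∫ θ in (0 : ℝ)..π, f (circleMap 0 1 θ) := by
    rw [← intervalIntegral.integral_add_adjacent_intervals
      (hf.mono_set (uIcc_subset_uIcc_left hpi)) (hf.mono_set (uIcc_subset_uIcc_right hpi)),
      hlower, two_smul]
  have hcoeff : π * (2 * π)⁻¹ * 2 = 1 := by field_simp
  rw [Real.circleAverage_def, hsplit, smul_smul, smul_smul, hcoeff, one_smul]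

end CircleAverage

section QPochhammer

open Filter Metric Topology

variable {q : ℂ}

lemma norm_mul_lt_one {R : Type*} [NonUnitalSeminormedRing R] {x y : R} (hx : ‖x‖ < 1)
    (hy : ‖y‖ < 1) : ‖x * y‖ < 1 :=
  (norm_mul_le x y).trans_lt <|
    mul_lt_one_of_nonneg_of_lt_one_left (norm_nonneg x) hx hy.le

lemma eq_apply_zero_of_apply_const_mul_eq {𝕜 X : Type*} [NormedDivisionRing 𝕜]
    [TopologicalSpace X] [T2Space X] {q : 𝕜} {f : 𝕜 → X} (hq : ‖q‖ < 1) (hf : ContinuousAt f 0)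
    (hinv : ∀ t, ‖t‖ < 1 → f (q * t) = f t) {t : 𝕜} (ht : ‖t‖ < 1) : f t = f 0 := by
  have hpow (n : ℕ) : ‖q ^ n * t‖ < 1 := by
    rw [norm_mul, norm_pow]
    exact mul_lt_one_of_nonneg_of_lt_one_right (pow_le_one₀ (norm_nonneg q) hq.le)
      (norm_nonneg t) ht
  have hconst (n : ℕ) : f (q ^ n * t) = f t := by
    induction n with
    | zero => simp
    | succ n ih => rw [pow_succ', mul_assoc, hinv _ (hpow n), ih]
  have hlim : Tendsto (fun n : ℕ ↦ q ^ n * t) atTop (𝓝 0) := by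
    simpa using (tendsto_pow_atTop_nhds_zero_of_norm_lt_one hq).mul_const t
  exact tendsto_nhds_unique (tendsto_const_nhds.congr fun n ↦ (hconst n).symm)
    (hf.tendsto.comp hlim)

lemma summable_norm_neg_mul_pow (hq : ‖q‖ < 1) (x : ℂ) :
    Summable fun k : ℕ ↦ ‖-(x * q ^ k)‖ := by
  simpa using (summable_geometric_of_lt_one (norm_nonneg q) hq).mul_left ‖x‖

lemma multipliable_one_sub_mul_pow (hq : ‖q‖ < 1) (x : ℂ) :
    Multipliable fun k : ℕ ↦ 1 - x * q ^ k := by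
  simpa [sub_eq_add_neg] using multipliable_one_add_of_summable (summable_norm_neg_mul_pow hq x)

@[simp]
lemma qp_zero (q : ℂ) : qp q 0 = 1 := by simp [qp]

lemma qp_eq_one_sub_mul_qp (hq : ‖q‖ < 1) (x : ℂ) : qp q x = (1 - x) * qp q (q * x) := by
  have hshift (k : ℕ) : 1 - x * q ^ (k + 1) = 1 - q * x * q ^ k := by ring
  have htail : Multipliable fun k : ℕ ↦ 1 - x * q ^ (k + 1) := by
    simpa only [hshift] using multipliable_one_sub_mul_pow hq (q * x)
  have hsplit := tprod_eq_zero_mul' (f := fun k : ℕ ↦ 1 - x * q ^ k) htail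
  simpa only [qp, hshift, pow_zero, mul_one] using hsplit

lemma qp_ne_zero (hq : ‖q‖ < 1) {x : ℂ} (hx : ‖x‖ < 1) : qp q x ≠ 0 := by
  have hfactor (k : ℕ) : 1 + -(x * q ^ k) ≠ 0 := by
    have hlt : ‖x * q ^ k‖ < 1 := by
      rw [norm_mul, norm_pow]
      exact mul_lt_one_of_nonneg_of_lt_one_left (norm_nonneg x) hx
        (pow_le_one₀ (norm_nonneg q) hq.le)
    rw [← sub_eq_add_neg, sub_ne_zero]
    exact fun h ↦ by simp [← h] at hlt
  simpa [qp, sub_eq_add_neg] using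
    tprod_one_add_ne_zero_of_summable hfactor (summable_norm_neg_mul_pow hq x)

lemma differentiable_qp (hq : ‖q‖ < 1) : Differentiable ℂ (qp q) := by
  intro x
  have hbound : Summable fun k : ℕ ↦ (‖x‖ + 1) * ‖q‖ ^ k :=
    (summable_geometric_of_lt_one (norm_nonneg q) hq).mul_left _
  have hprod := hbound.hasProdLocallyUniformlyOn_nat_one_add (f := fun k y ↦ -(y * q ^ k))
    (K := ball (0 : ℂ) (‖x‖ + 1)) isOpen_ball
    (.of_forall fun k y hy ↦ by
      rw [norm_neg, norm_mul, norm_pow]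
      gcongr
      exact (mem_ball_zero_iff.mp hy).le)
    fun k ↦ by fun_prop
  have hdiff : DifferentiableOn ℂ (qp q) (ball 0 (‖x‖ + 1)) := by
    refine (hprod.differentiableOn (.of_forall fun s ↦ ?_) isOpen_ball).congr fun y _ ↦ ?_
    · simpa [Finset.prod_fn] using DifferentiableOn.finsetProd fun _ _ ↦ by fun_prop
    · simp [qp, sub_eq_add_neg]
  exact hdiff.differentiableAt (isOpen_ball.mem_nhds (by simp))

lemma qp_mul_qp_neg (hq : ‖q‖ < 1) (x : ℂ) : qp q x * qp q (-x) = qp (q ^ 2) (x ^ 2) := by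
  rw [qp, qp, qp, ← (multipliable_one_sub_mul_pow hq x).tprod_mul
    (multipliable_one_sub_mul_pow hq (-x))]
  exact tprod_congr fun k ↦ by ring

lemma qp_sq_mul_qp_sq (hq : ‖q‖ < 1) (x : ℂ) :
    qp (q ^ 2) x * qp (q ^ 2) (q * x) = qp q x := by
  have hq2 : ‖q ^ 2‖ < 1 := by
    rw [norm_pow]
    exact pow_lt_one₀ (norm_nonneg q) hq two_ne_zero
  have heven (k : ℕ) : 1 - x * q ^ (2 * k) = 1 - x * (q ^ 2) ^ k := by ring
  have hodd (k : ℕ) : 1 - x * q ^ (2 * k + 1) = 1 - q * x * (q ^ 2) ^ k := by ring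
  have hsplit := tprod_even_mul_odd (f := fun k ↦ 1 - x * q ^ k)
    (by simpa only [heven] using multipliable_one_sub_mul_pow hq2 x)
    (by simpa only [hodd] using multipliable_one_sub_mul_pow hq2 (q * x))
  simpa only [qp, heven, hodd] using hsplit

lemma qp_sq_eq_mul (hq : ‖q‖ < 1) {u : ℂ} (hu : u ^ 2 = q) (z : ℂ) :
    qp q (z ^ 2) = qp q z * qp q (-z) * qp q (u * z) * qp q (-(u * z)) := by
  rw [qp_mul_qp_neg hq, mul_assoc, qp_mul_qp_neg hq, mul_pow, hu, qp_sq_mul_qp_sq hq]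

end QPochhammer

section Theta

open Metric
open Real (circleAverage)

variable {q : ℂ}

/-- The function `h(x; l)` in the variable `z` with `x = (z + z⁻¹) / 2`. -/
noncomputable def laurentH (q l z : ℂ) : ℂ := qp q (l * z) * qp q (l * z⁻¹)

/-- The product `(l z, q l z⁻¹; q)_∞`, which is `laurentH` with the factor `1 - l z⁻¹` removed. For
`l = 1` it is the theta function `(z, q z⁻¹; q)_∞`. -/
noncomputable def skewH (q l z : ℂ) : ℂ := qp q (l * z) * qp q (q * l * z⁻¹)

lemma laurentH_zero (q z : ℂ) : laurentH q 0 z = 1 := by simp [laurentH]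

lemma laurentH_inv (q l z : ℂ) : laurentH q l z⁻¹ = laurentH q l z := by
  rw [laurentH, laurentH, inv_inv, mul_comm]

lemma hh_eq_laurentH (q : ℂ) (θ : ℝ) (l : ℂ) : hh q θ l = laurentH q l (circleMap 0 1 θ) := by
  simp [hh, laurentH, circleMap, Complex.exp_neg]

lemma laurentH_one_sq (hq : ‖q‖ < 1) {u : ℂ} (hu : u ^ 2 = q) (z : ℂ) :
    laurentH q 1 (z ^ 2) =
      laurentH q 1 z * laurentH q (-1) z * laurentH q u z * laurentH q (-u) z := by
  simp only [laurentH, one_mul, neg_mul, ← inv_pow, qp_sq_eq_mul hq hu]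
  ring

lemma laurentH_eq_mul_skewH (hq : ‖q‖ < 1) (l z : ℂ) :
    laurentH q l z = (1 - l * z⁻¹) * skewH q l z := by
  rw [laurentH, skewH, qp_eq_one_sub_mul_qp hq (l * z⁻¹), mul_assoc q]
  ring

lemma laurentH_eq_mul_skewH_mul (hq0 : q ≠ 0) (hq : ‖q‖ < 1) (l z : ℂ) :
    laurentH q l z = (1 - l * z) * skewH q l (q * z) := by
  have hinv : q * l * (q * z)⁻¹ = l * z⁻¹ := by field_simp
  rw [laurentH, skewH, hinv, qp_eq_one_sub_mul_qp hq (l * z), mul_left_comm l q z]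
  ring

lemma laurentH_eq_mul_laurentH_mul (hq : ‖q‖ < 1) (l z : ℂ) :
    laurentH q l z = (1 - l * z) * (1 - l * z⁻¹) * laurentH q (q * l) z := by
  rw [laurentH, laurentH, qp_eq_one_sub_mul_qp hq (l * z), qp_eq_one_sub_mul_qp hq (l * z⁻¹),
    mul_assoc q, mul_assoc q]
  ring

lemma skewH_one_const_mul (hq0 : q ≠ 0) (hq : ‖q‖ < 1) {w : ℂ} (hw : w ≠ 0) :
    skewH q 1 (q * w) = -w⁻¹ * skewH q 1 w := by
  have hinv : q * 1 * (q * w)⁻¹ = w⁻¹ := by field_simp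
  rw [skewH, skewH, hinv, one_mul, one_mul, mul_one, qp_eq_one_sub_mul_qp hq w,
    qp_eq_one_sub_mul_qp hq w⁻¹]
  field_simp
  ring

lemma laurentH_ne_zero (hq : ‖q‖ < 1) {l z : ℂ} (hl : ‖l‖ < 1) (hz : ‖z‖ = 1) :
    laurentH q l z ≠ 0 :=
  mul_ne_zero (qp_ne_zero hq (by simpa [hz] using hl)) (qp_ne_zero hq (by simpa [hz] using hl))

lemma norm_const_mul_mul_inv_lt_one {l z : ℂ} (hl : ‖l‖ < 1) (hz0 : z ≠ 0) (hqz : ‖q‖ ≤ ‖z‖) :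
    ‖q * l * z⁻¹‖ < 1 := by
  calc ‖q * l * z⁻¹‖ = ‖l‖ * (‖q‖ / ‖z‖) := by
        rw [norm_mul, norm_mul, norm_inv]
        ring
    _ < 1 := mul_lt_one_of_nonneg_of_lt_one_left (norm_nonneg l) hl
        ((div_le_one (norm_pos_iff.mpr hz0)).mpr hqz)

lemma skewH_ne_zero (hq : ‖q‖ < 1) {l z : ℂ} (hl : ‖l‖ < 1) (hz0 : z ≠ 0) (hqz : ‖q‖ ≤ ‖z‖)
    (hz : ‖z‖ ≤ 1) : skewH q l z ≠ 0 := by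
  refine mul_ne_zero (qp_ne_zero hq ?_)
    (qp_ne_zero hq (norm_const_mul_mul_inv_lt_one hl hz0 hqz))
  rw [norm_mul]
  exact mul_lt_one_of_nonneg_of_lt_one_left (norm_nonneg l) hl hz

lemma differentiableAt_skewH (hq : ‖q‖ < 1) (l : ℂ) {z : ℂ} (hz : z ≠ 0) :
    DifferentiableAt ℂ (skewH q l) z := by
  have hqp := differentiable_qp hq
  unfold skewH
  fun_prop (disch := assumption)

lemma continuousOn_laurentH_comp (hq : ‖q‖ < 1) {X : Type*} [TopologicalSpace X] {s : Set X}
    {l z : X → ℂ} (hl : ContinuousOn l s) (hz : ContinuousOn z s) (hz0 : ∀ x ∈ s, z x ≠ 0) :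
    ContinuousOn (fun x ↦ laurentH q (l x) (z x)) s := by
  have hqp := (differentiable_qp hq).continuous
  unfold laurentH
  fun_prop (disch := assumption)

/-- The family `θ(w) / (t w⁻¹; q)_∞` interpolating between the theta function `θ = skewH q 1` at
`t = 0` and the entire function `(w; q)_∞` at `t = q`. -/
noncomputable def thetaQuotient (q t w : ℂ) : ℂ := skewH q 1 w / qp q (t * w⁻¹)

lemma thetaQuotient_zero (q : ℂ) : thetaQuotient q 0 = skewH q 1 := by
  ext w
  simp [thetaQuotient]

lemma differentiableAt_thetaQuotient (hq : ‖q‖ < 1) {t w : ℂ} (hw : w ≠ 0)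
    (htw : ‖t * w⁻¹‖ < 1) : DifferentiableAt ℂ (thetaQuotient q t) w := by
  have hqp := differentiable_qp hq
  have hskew := differentiableAt_skewH hq 1 hw
  have hne := qp_ne_zero hq htw
  unfold thetaQuotient
  fun_prop (disch := assumption)

lemma thetaQuotient_eq_sub (hq0 : q ≠ 0) (hq : ‖q‖ < 1) {t w : ℂ} (hw : w ≠ 0)
    (htw : qp q (t * w⁻¹) ≠ 0) :
    thetaQuotient q t w = thetaQuotient q (q * t) w - t * thetaQuotient q (q * t) (q * w) := by
  have hpole : thetaQuotient q (q * t) w = (1 - t * w⁻¹) * thetaQuotient q t w := by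
    have hqp := qp_eq_one_sub_mul_qp hq (t * w⁻¹)
    have hne : 1 - t * w⁻¹ ≠ 0 := left_ne_zero_of_mul (hqp ▸ htw)
    rw [thetaQuotient, thetaQuotient, hqp, mul_div_assoc', mul_div_mul_left _ _ hne, mul_assoc q]
  have hdilate : thetaQuotient q (q * t) (q * w) = -w⁻¹ * thetaQuotient q t w := by
    have hinv : q * t * (q * w)⁻¹ = t * w⁻¹ := by field_simp
    rw [thetaQuotient, thetaQuotient, hinv, skewH_one_const_mul hq0 hq hw, mul_div_assoc]
  rw [hpole, hdilate]
  ring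

lemma circleAverage_thetaQuotient_eq_mul (hq0 : q ≠ 0) (hq : ‖q‖ < 1) {t : ℂ} (ht : ‖t‖ < 1) :
    circleAverage (thetaQuotient q t) 0 1 =
      (1 - t) * circleAverage (thetaQuotient q (q * t)) 0 1 := by
  have hdiff (w : ℂ) (hqw : ‖q‖ ≤ ‖w‖) (_ : ‖w‖ ≤ 1) :
      DifferentiableAt ℂ (thetaQuotient q (q * t)) w := by
    have hw : w ≠ 0 := norm_pos_iff.mp ((norm_pos_iff.mpr hq0).trans_le hqw)
    exact differentiableAt_thetaQuotient hq hw (norm_const_mul_mul_inv_lt_one ht hw hqw)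
  rw [← smul_eq_mul, ← circleAverage_sub_smul_comp_const_mul hq0 hq.le hdiff t]
  refine Real.circleAverage_congr_sphere fun w hw ↦ ?_
  have hw : ‖w‖ = 1 := by simpa using hw
  have hw0 : w ≠ 0 := norm_ne_zero_iff.mp (by simp [hw])
  exact thetaQuotient_eq_sub hq0 hq hw0 (qp_ne_zero hq (by simpa [hw] using ht))

lemma continuousOn_circleAverage_thetaQuotient (hq : ‖q‖ < 1) :
    ContinuousOn (fun t ↦ circleAverage (thetaQuotient q t) 0 1) (ball 0 1) := by
  refine continuousOn_circleAverage fun p ⟨ht, hw⟩ ↦ ?_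
  rw [mem_ball_zero_iff] at ht
  rw [abs_one, mem_sphere_zero_iff_norm] at hw
  have hw0 : p.2 ≠ 0 := norm_ne_zero_iff.mp (by simp [hw])
  have hqp := (differentiable_qp hq).continuous
  have hskew := (differentiableAt_skewH hq 1 hw0).continuousAt
  have hne : qp q (p.1 * p.2⁻¹) ≠ 0 := qp_ne_zero hq (by simpa [hw] using ht)
  exact ((hskew.comp continuousAt_snd).div (hqp.continuousAt.comp
    (continuousAt_fst.mul (continuousAt_snd.inv₀ hw0))) hne).continuousWithinAt

lemma circleAverage_thetaQuotient_self (hq : ‖q‖ < 1) :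
    circleAverage (thetaQuotient q q) 0 1 = 1 := by
  calc circleAverage (thetaQuotient q q) 0 1 = circleAverage (qp q) 0 1 := by
        refine Real.circleAverage_congr_sphere fun w hw ↦ ?_
        have hne : qp q (q * w⁻¹) ≠ 0 := qp_ne_zero hq (by simp_all)
        rw [thetaQuotient, skewH, one_mul, mul_one, mul_div_cancel_right₀ _ hne]
    _ = qp q 0 := (differentiable_qp hq).diffContOnCl.circleAverage
    _ = 1 := qp_zero q

lemma circleAverage_skewH_one (hq0 : q ≠ 0) (hq : ‖q‖ < 1) :
    circleAverage (skewH q 1) 0 1 = (qp q q)⁻¹ := by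
  have hzero : ContinuousAt (fun t ↦ circleAverage (thetaQuotient q t) 0 1 / qp q t) 0 :=
    ((continuousOn_circleAverage_thetaQuotient hq).continuousAt (ball_mem_nhds 0 one_pos)).div
      (differentiable_qp hq 0).continuousAt (qp_ne_zero hq (by simp))
  have hinv (t : ℂ) (ht : ‖t‖ < 1) : circleAverage (thetaQuotient q (q * t)) 0 1 / qp q (q * t) =
      circleAverage (thetaQuotient q t) 0 1 / qp q t := by
    have hne : 1 - t ≠ 0 := sub_ne_zero.mpr fun h ↦ by simp [← h] at ht
    rw [circleAverage_thetaQuotient_eq_mul hq0 hq ht, qp_eq_one_sub_mul_qp hq t,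
      mul_div_mul_left _ _ hne]
  have hconst := eq_apply_zero_of_apply_const_mul_eq hq hzero hinv hq
  rwa [circleAverage_thetaQuotient_self hq, thetaQuotient_zero, qp_zero, div_one, one_div,
    eq_comm] at hconst

lemma circleAverage_laurentH_one (hq0 : q ≠ 0) (hq : ‖q‖ < 1) :
    circleAverage (laurentH q 1) 0 1 = 2 * (qp q q)⁻¹ := by
  have hdiff (w : ℂ) (hqw : ‖q‖ ≤ ‖w‖) (_ : ‖w‖ ≤ 1) : DifferentiableAt ℂ (skewH q 1) w :=
    differentiableAt_skewH hq 1 (norm_pos_iff.mp ((norm_pos_iff.mpr hq0).trans_le hqw))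
  have hdouble := circleAverage_sub_smul_comp_const_mul hq0 hq.le hdiff (-1)
  rw [circleAverage_skewH_one hq0 hq, smul_eq_mul, sub_neg_eq_add, one_add_one_eq_two] at hdouble
  rw [← hdouble]
  refine Real.circleAverage_congr_sphere fun w hw ↦ ?_
  have hw0 : w ≠ 0 := ne_of_mem_sphere hw (by simp)
  simp only [laurentH_eq_mul_skewH hq, skewH_one_const_mul hq0 hq hw0, smul_eq_mul]
  ring

end Theta

section DualHahn

open Metric
open Real (circleAverage)

variable {q a b c : ℂ}

/-- The weight function of the continuous dual `q`-Hahn polynomials with parameters `a`, `b`, `c`,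
as a function of `z = e^{iθ}`. -/
noncomputable def dualHahnWeight (q a b c z : ℂ) : ℂ :=
  laurentH q 1 (z ^ 2) / (laurentH q a z * laurentH q b z * laurentH q c z)

lemma dualHahnWeight_swap_left (q a b c : ℂ) : dualHahnWeight q a b c = dualHahnWeight q b a c := by
  ext z
  rw [dualHahnWeight, dualHahnWeight, mul_comm (laurentH q a z)]

lemma dualHahnWeight_rotate (q a b c : ℂ) : dualHahnWeight q a b c = dualHahnWeight q c a b := by
  ext z
  rw [dualHahnWeight, dualHahnWeight, mul_rotate, mul_rotate]

lemma dualHahnWeight_zero (q : ℂ) : dualHahnWeight q 0 0 0 = fun z ↦ laurentH q 1 (z ^ 2) := by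
  ext z
  simp [dualHahnWeight, laurentH_zero]

lemma dualHahnWeight_inv (q a b c z : ℂ) :
    dualHahnWeight q a b c z⁻¹ = dualHahnWeight q a b c z := by
  simp only [dualHahnWeight, laurentH_inv, inv_pow]

lemma hh_quotient_eq_dualHahnWeight (hq : ‖q‖ < 1) {u : ℂ} (hu : u ^ 2 = q) (a b c : ℂ) (θ : ℝ) :
    (hh q θ 1 * hh q θ (-1) * hh q θ u * hh q θ (-u)) / (hh q θ a * hh q θ b * hh q θ c) =
      dualHahnWeight q a b c (circleMap 0 1 θ) := by
  simp only [hh_eq_laurentH, dualHahnWeight, laurentH_one_sq hq hu]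

lemma continuousOn_dualHahnWeight (hq : ‖q‖ < 1) (hb : ‖b‖ < 1) (hc : ‖c‖ < 1) :
    ContinuousOn (Function.uncurry fun l ↦ dualHahnWeight q l b c)
      (ball 0 1 ×ˢ sphere 0 1) := by
  have hz0 : ∀ p ∈ ball (0 : ℂ) 1 ×ˢ sphere (0 : ℂ) 1, p.2 ≠ 0 := fun p hp ↦
    ne_of_mem_sphere hp.2 one_ne_zero
  have hden {l : ℂ × ℂ → ℂ} (hl : ContinuousOn l (ball 0 1 ×ˢ sphere 0 1)) :=
    continuousOn_laurentH_comp hq hl continuousOn_snd hz0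
  have hnum : ContinuousOn (fun p : ℂ × ℂ ↦ laurentH q 1 (p.2 ^ 2)) (ball 0 1 ×ˢ sphere 0 1) :=
    continuousOn_laurentH_comp hq continuousOn_const (by fun_prop)
      fun p hp ↦ pow_ne_zero 2 (hz0 p hp)
  simp only [Function.uncurry_def, dualHahnWeight]
  refine hnum.div (((hden continuousOn_fst).mul (hden continuousOn_const)).mul
    (hden continuousOn_const)) fun p ⟨hl, hz⟩ ↦ ?_
  rw [mem_ball_zero_iff] at hl
  rw [mem_sphere_zero_iff_norm] at hz
  exact mul_ne_zero (mul_ne_zero (laurentH_ne_zero hq hl hz) (laurentH_ne_zero hq hb hz))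
    (laurentH_ne_zero hq hc hz)

lemma circleIntegrable_dualHahnWeight (hq : ‖q‖ < 1) (ha : ‖a‖ < 1) (hb : ‖b‖ < 1)
    (hc : ‖c‖ < 1) : CircleIntegrable (dualHahnWeight q a b c) 0 1 := by
  have hmaps : Set.MapsTo (fun z : ℂ ↦ (a, z)) (sphere 0 1) (ball 0 1 ×ˢ sphere 0 1) :=
    fun z hz ↦ ⟨mem_ball_zero_iff.mpr ha, hz⟩
  exact ((continuousOn_dualHahnWeight hq hb hc).comp (by fun_prop) hmaps).circleIntegrable
    zero_le_one

/-- The function whose difference under `z ↦ q z` is the weight times `z + z⁻¹ - (a+b+c) + abc`. -/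
noncomputable def dualHahnPrimitive (q a b c z : ℂ) : ℂ :=
  z * skewH q 1 (z ^ 2) / (skewH q a z * skewH q b z * skewH q c z)

lemma differentiableAt_dualHahnPrimitive (hq : ‖q‖ < 1) (ha : ‖a‖ < 1) (hb : ‖b‖ < 1)
    (hc : ‖c‖ < 1) {z : ℂ} (hz0 : z ≠ 0) (hqz : ‖q‖ ≤ ‖z‖) (hz : ‖z‖ ≤ 1) :
    DifferentiableAt ℂ (dualHahnPrimitive q a b c) z := by
  have hne {l : ℂ} (hl : ‖l‖ < 1) := skewH_ne_zero hq hl hz0 hqz hz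
  have hskew (l : ℂ) := differentiableAt_skewH hq l hz0
  have hsq : DifferentiableAt ℂ (fun z ↦ skewH q 1 (z ^ 2)) z :=
    (differentiableAt_skewH hq 1 (pow_ne_zero 2 hz0)).comp z (differentiableAt_pow 2)
  exact (differentiableAt_id.mul hsq).div (((hskew a).mul (hskew b)).mul (hskew c))
    (mul_ne_zero (mul_ne_zero (hne ha) (hne hb)) (hne hc))

lemma dualHahnPrimitive_sub (hq0 : q ≠ 0) (hq : ‖q‖ < 1) (ha : ‖a‖ < 1) (hb : ‖b‖ < 1)
    (hc : ‖c‖ < 1) {z : ℂ} (hz : ‖z‖ = 1) :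
    dualHahnPrimitive q a b c z - dualHahnPrimitive q a b c (q * z) =
      (z + z⁻¹ - (a + b + c) + a * b * c) * dualHahnWeight q a b c z := by
  have hz0 : z ≠ 0 := norm_ne_zero_iff.mp (by simp [hz])
  have hskew {l : ℂ} (hl : ‖l‖ < 1) :
      (skewH q l z)⁻¹ = (1 - l * z⁻¹) / laurentH q l z := by
    have hne := laurentH_ne_zero hq hl hz
    rw [laurentH_eq_mul_skewH hq] at hne ⊢
    rw [div_mul_cancel_left₀ (left_ne_zero_of_mul hne)]
  have hskew' {l : ℂ} (hl : ‖l‖ < 1) :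
      (skewH q l (q * z))⁻¹ = (1 - l * z) / laurentH q l z := by
    have hne := laurentH_ne_zero hq hl hz
    rw [laurentH_eq_mul_skewH_mul hq0 hq] at hne ⊢
    rw [div_mul_cancel_left₀ (left_ne_zero_of_mul hne)]
  have htheta : skewH q 1 ((q * z) ^ 2) = (q * z ^ 4)⁻¹ * skewH q 1 (z ^ 2) := by
    have hz2 : z ^ 2 ≠ 0 := pow_ne_zero 2 hz0
    rw [show (q * z) ^ 2 = q * (q * z ^ 2) by ring,
      skewH_one_const_mul hq0 hq (mul_ne_zero hq0 hz2), skewH_one_const_mul hq0 hq hz2]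
    field_simp
  simp only [dualHahnPrimitive, dualHahnWeight, div_eq_mul_inv _ (_ * _), mul_inv, htheta,
    hskew ha, hskew hb, hskew hc, hskew' ha, hskew' hb, hskew' hc, laurentH_eq_mul_skewH hq 1]
  field_simp
  ring

lemma dualHahnWeight_const_mul (hq : ‖q‖ < 1) (ha : ‖a‖ < 1) {z : ℂ} (hz : ‖z‖ = 1) :
    dualHahnWeight q (q * a) b c z =
      (1 - a * z) * (1 - a * z⁻¹) * dualHahnWeight q a b c z := by
  have hne := laurentH_ne_zero hq ha hz
  rw [laurentH_eq_mul_laurentH_mul hq] at hne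
  rw [dualHahnWeight, dualHahnWeight, laurentH_eq_mul_laurentH_mul hq a, mul_div_assoc',
    mul_assoc _ (laurentH q (q * a) z), mul_assoc _ (_ * laurentH q b z),
    mul_div_mul_left _ _ (left_ne_zero_of_mul hne)]

lemma circleAverage_dualHahnWeight_const_mul (hq0 : q ≠ 0) (hq : ‖q‖ < 1)
    (ha : ‖a‖ < 1) (hb : ‖b‖ < 1) (hc : ‖c‖ < 1) :
    circleAverage (dualHahnWeight q (q * a) b c) 0 1 =
      (1 - a * b) * (1 - a * c) * circleAverage (dualHahnWeight q a b c) 0 1 := by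
  have hdiff (z : ℂ) (hqz : ‖q‖ ≤ ‖z‖) (hz : ‖z‖ ≤ 1) :
      DifferentiableAt ℂ (dualHahnPrimitive q a b c) z :=
    differentiableAt_dualHahnPrimitive hq ha hb hc
      (norm_pos_iff.mp ((norm_pos_iff.mpr hq0).trans_le hqz)) hqz hz
  have hcauchy := circleAverage_sub_smul_comp_const_mul hq0 hq.le hdiff 1
  have hzero : circleAverage (fun z ↦ ((1 - a * b) * (1 - a * c)) • dualHahnWeight q a b c z -
      dualHahnWeight q (q * a) b c z) 0 1 = 0 := by
    calc _ = circleAverage (fun z ↦ a • (dualHahnPrimitive q a b c z -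
          (1 : ℂ) • dualHahnPrimitive q a b c (q * z))) 0 1 := by
          refine Real.circleAverage_congr_sphere fun z hz ↦ ?_
          have hz : ‖z‖ = 1 := by simpa using hz
          have hz0 : z ≠ 0 := norm_ne_zero_iff.mp (by simp [hz])
          simp only [smul_eq_mul, one_mul, dualHahnPrimitive_sub hq0 hq ha hb hc hz,
            dualHahnWeight_const_mul hq ha hz]
          field_simp
          ring
      _ = 0 := by rw [Real.circleAverage_fun_smul, hcauchy, sub_self, zero_smul, smul_zero]
  rw [Real.circleAverage_fun_sub (circleIntegrable_dualHahnWeight hq ha hb hc).const_fun_smul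
    (circleIntegrable_dualHahnWeight hq (norm_mul_lt_one hq ha) hb hc),
    Real.circleAverage_fun_smul, sub_eq_zero] at hzero
  exact hzero.symm

lemma circleAverage_dualHahnWeight_zero_left (hq0 : q ≠ 0) (hq : ‖q‖ < 1) (ha : ‖a‖ < 1)
    (hb : ‖b‖ < 1) (hc : ‖c‖ < 1) :
    circleAverage (dualHahnWeight q 0 b c) 0 1 =
      qp q (a * b) * qp q (a * c) * circleAverage (dualHahnWeight q a b c) 0 1 := by
  have hqp := (differentiable_qp hq).continuous
  have hcont : ContinuousAt (fun l ↦ circleAverage (dualHahnWeight q l b c) 0 1) 0 :=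
    (continuousOn_circleAverage (by simpa using continuousOn_dualHahnWeight hq hb hc)).continuousAt
      (ball_mem_nhds 0 one_pos)
  have hzero : ContinuousAt (fun l ↦ qp q (l * b) * qp q (l * c) *
      circleAverage (dualHahnWeight q l b c) 0 1) 0 := by fun_prop
  have hinv (l : ℂ) (hl : ‖l‖ < 1) : qp q (q * l * b) * qp q (q * l * c) *
      circleAverage (dualHahnWeight q (q * l) b c) 0 1 =
      qp q (l * b) * qp q (l * c) * circleAverage (dualHahnWeight q l b c) 0 1 := by
    rw [circleAverage_dualHahnWeight_const_mul hq0 hq hl hb hc, qp_eq_one_sub_mul_qp hq (l * b),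
      qp_eq_one_sub_mul_qp hq (l * c), mul_assoc q, mul_assoc q]
    ring
  simpa using (eq_apply_zero_of_apply_const_mul_eq hq hzero hinv ha).symm

lemma circleAverage_dualHahnWeight (hq0 : q ≠ 0) (hq : ‖q‖ < 1) (ha : ‖a‖ < 1) (hb : ‖b‖ < 1)
    (hc : ‖c‖ < 1) :
    circleAverage (dualHahnWeight q a b c) 0 1 =
      2 / (qp q q * qp q (a * b) * qp q (a * c) * qp q (b * c)) := by
  have h0 : ‖(0 : ℂ)‖ < 1 := by simp
  have hint : CircleIntegrable (laurentH q 1) 0 1 :=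
    (continuousOn_laurentH_comp hq continuousOn_const continuousOn_id fun z hz ↦
      ne_of_mem_sphere hz one_ne_zero).circleIntegrable zero_le_one
  have hremove_a := circleAverage_dualHahnWeight_zero_left hq0 hq ha hb hc
  have hremove_b := circleAverage_dualHahnWeight_zero_left hq0 hq hb h0 hc
  have hremove_c := circleAverage_dualHahnWeight_zero_left hq0 hq hc h0 h0
  rw [dualHahnWeight_swap_left q b, hremove_a, mul_zero, qp_zero, one_mul] at hremove_b
  rw [← dualHahnWeight_rotate q 0 0 c, hremove_b, mul_zero, qp_zero, one_mul, one_mul,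
    dualHahnWeight_zero, circleAverage_comp_pow hint two_ne_zero,
    circleAverage_laurentH_one hq0 hq] at hremove_c
  have hne_ab := qp_ne_zero hq (norm_mul_lt_one ha hb)
  have hne_ac := qp_ne_zero hq (norm_mul_lt_one ha hc)
  have hne_bc := qp_ne_zero hq (norm_mul_lt_one hb hc)
  rw [eq_div_iff (mul_ne_zero (mul_ne_zero (mul_ne_zero (qp_ne_zero hq hq) hne_ab) hne_ac) hne_bc)]
  linear_combination -qp q q * hremove_c + 2 * mul_inv_cancel₀ (qp_ne_zero hq hq)

end DualHahn

theorem integral_step_six (q u a b c : ℂ) (hq0 : 0 < ‖q‖) (hq : ‖q‖ < 1) (hu : u ^ 2 = q)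
    (ha : ‖a‖ < 1) (hb : ‖b‖ < 1) (hc : ‖c‖ < 1) :
    ∫ θ in (0:ℝ)..Real.pi,
      (hh q θ 1 * hh q θ (-1) * hh q θ u * hh q θ (-u)) / (hh q θ a * hh q θ b * hh q θ c)
      = 2 * (Real.pi : ℂ) / (qp q q * qp q (a * b) * qp q (a * c) * qp q (b * c)) := by
  simp only [hh_quotient_eq_dualHahnWeight hq hu]
  rw [intervalIntegral_zero_pi_eq_smul_circleAverage
    (circleIntegrable_dualHahnWeight hq ha hb hc) (dualHahnWeight_inv q a b c),
    circleAverage_dualHahnWeight (norm_pos_iff.mp hq0) hq ha hb hc, real_smul]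
  ring
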